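/- arXiv:1608.00091 — 2 statements merged into one kernel-verified Lean document; each statement's English description precedes it below -/
import Mathlib

section
/- For each i = 0, …, d, the multiplicity of the eigenvalue λ_i of Γ can be recovered from the predistance polynomials as m_i = n·(Σ_{j=0}^{d} p_j(λ_i)²/p_j(λ0))^{−1}. -/
/-!
Let `P` be the square matrix with entries `P j i = p_j(λ_i)`, and put `W = diag(m_i / n)` and
`K = diag(p_j(λ_0))`. Orthogonality and the normalization say `P W Pᵀ = K`. The matrix `K` is
invertible: `p_j(λ_0) = ⟨p_j, p_j⟩` is positive because `p_j` is nonzero of degree at most `d` and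
so cannot vanish at all `d + 1` points `λ_i`. Hence `W Pᵀ K⁻¹` is a right inverse of `P`, and
therefore also a left inverse. The diagonal entries of `W Pᵀ K⁻¹ P = 1` read
`(m_i / n) * ∑ j, p_j(λ_i)² / p_j(λ_0) = 1`.
-/

open Polynomial Finset

/-- The scalar product `⟨f,g⟩_Γ = (1/n)·Σ_{i=0}^d m_i f(λ_i) g(λ_i)`. -/
noncomputable def ip (n d : ℕ) (m : ℕ → ℕ) (lam : ℕ → ℝ) (f g : Polynomial ℝ) : ℝ :=
  (n : ℝ)⁻¹ * ∑ i ∈ Finset.range (d + 1), (m i : ℝ) * f.eval (lam i) * g.eval (lam i)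

/-- The preintersection numbers `ξ_{ij}^h = ⟨p_i p_j, p_h⟩ / ⟨p_h, p_h⟩`. -/
noncomputable def xi (n d : ℕ) (m : ℕ → ℕ) (lam : ℕ → ℝ) (p : ℕ → Polynomial ℝ)
    (i j h : ℕ) : ℝ :=
  ip n d m lam (p i * p j) (p h) / ip n d m lam (p h) (p h)

/-- `α_i = ξ_{1,i}^i`. -/
noncomputable def alph (n d : ℕ) (m : ℕ → ℕ) (lam : ℕ → ℝ) (p : ℕ → Polynomial ℝ)
    (i : ℕ) : ℝ :=
  xi n d m lam p 1 i i

/-- `β_i = ξ_{1,i+1}^i` for `i < d`, with the convention `β_d = 0`. -/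
noncomputable def bet (n d : ℕ) (m : ℕ → ℕ) (lam : ℕ → ℝ) (p : ℕ → Polynomial ℝ)
    (i : ℕ) : ℝ :=
  if i < d then xi n d m lam p 1 (i + 1) i else 0

/-- `γ_i = ξ_{1,i-1}^i` for `1 ≤ i`, with the convention `γ_0 = 0`. -/
noncomputable def gam (n d : ℕ) (m : ℕ → ℕ) (lam : ℕ → ℝ) (p : ℕ → Polynomial ℝ)
    (i : ℕ) : ℝ :=
  if 1 ≤ i then xi n d m lam p 1 (i - 1) i else 0

/-- The scalar product is definite on nonzero polynomials of degree at most `d`. -/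
lemma ip_self_pos (n d : ℕ) (hn : 0 < n) (m : ℕ → ℕ) (lam : ℕ → ℝ)
    (hlam : ∀ i j : ℕ, i < j → j ≤ d → lam j < lam i) (hmpos : ∀ i ≤ d, 0 < m i)
    (f : Polynomial ℝ) (hf : f ≠ 0) (hdeg : f.natDegree ≤ d) : 0 < ip n d m lam f f := by
  have hinj : Set.InjOn lam (Finset.range (d + 1) : Set ℕ) := by
    intro a ha b hb hab
    simp only [Finset.coe_range, Set.mem_Iio] at ha hb
    rcases lt_trichotomy a b with h | h | h
    · exact absurd hab (hlam a b h (by omega)).ne'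
    · exact h
    · exact absurd hab (hlam b a h (by omega)).ne
  obtain ⟨i, hi, hne⟩ : ∃ i ∈ Finset.range (d + 1), f.eval (lam i) ≠ 0 := by
    by_contra! h
    refine hf (Polynomial.eq_zero_of_natDegree_lt_card_of_eval_eq_zero' f
      ((Finset.range (d + 1)).image lam) ?_ ?_)
    · simpa using h
    · rw [Finset.card_image_of_injOn hinj, Finset.card_range]
      omega
  have hid : i ≤ d := by
    rw [Finset.mem_range] at hi
    omega
  unfold ip
  refine mul_pos (by positivity) (Finset.sum_pos' (fun k _ => ?_) ⟨i, hi, ?_⟩)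
  · rw [mul_assoc]
    exact mul_nonneg (Nat.cast_nonneg _) (mul_self_nonneg _)
  · rw [mul_assoc]
    exact mul_pos (Nat.cast_pos.mpr (hmpos i hid)) (mul_self_pos.mpr hne)

theorem stmt_7
    (V : Type) [Fintype V] [DecidableEq V] (G : SimpleGraph V) [DecidableRel G.Adj]
    (hconn : G.Connected) (n d : ℕ) (hn : Fintype.card V = n)
    (lam : ℕ → ℝ) (m : ℕ → ℕ)
    (hchar : (G.adjMatrix ℝ).charpoly =
      ∏ i ∈ Finset.range (d + 1), (Polynomial.X - Polynomial.C (lam i)) ^ m i)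
    (hlam : ∀ i j : ℕ, i < j → j ≤ d → lam j < lam i)
    (hm0 : m 0 = 1) (hmpos : ∀ i ≤ d, 0 < m i)
    (p : ℕ → Polynomial ℝ)
    (hdeg : ∀ i ≤ d, (p i).degree = (i : ℕ))
    (horth : ∀ i ≤ d, ∀ j ≤ d, i ≠ j → ip n d m lam (p i) (p j) = 0)
    (hnorm : ∀ i ≤ d, ip n d m lam (p i) (p i) = (p i).eval (lam 0))
    :
    ∀ i ≤ d, (m i : ℝ) =
      (n : ℝ) * (∑ j ∈ Finset.range (d + 1),
        ((p j).eval (lam i)) ^ 2 / (p j).eval (lam 0))⁻¹ := by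
  intro i hi
  have hnpos : 0 < n := by
    have := hconn.nonempty
    rw [← hn]
    exact Fintype.card_pos
  have hk : ∀ j ≤ d, (p j).eval (lam 0) ≠ 0 := by
    intro j hj
    rw [← hnorm j hj]
    refine (ip_self_pos n d hnpos m lam hlam hmpos (p j) ?_ ?_).ne'
    · intro h
      have := hdeg j hj
      simp [h] at this
    · rw [Polynomial.natDegree_eq_of_degree_eq_some (hdeg j hj)]
      exact hj
  let P : Matrix (Fin (d + 1)) (Fin (d + 1)) ℝ := fun j k => (p j).eval (lam k)
  -- `B = W Pᵀ K⁻¹`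
  let B : Matrix (Fin (d + 1)) (Fin (d + 1)) ℝ := fun k j =>
    (n : ℝ)⁻¹ * (m k : ℝ) * (p j).eval (lam k) * ((p j).eval (lam 0))⁻¹
  have hPB : P * B = 1 := by
    ext a b
    have ha : (a : ℕ) ≤ d := by omega
    have hb : (b : ℕ) ≤ d := by omega
    have hab : (P * B) a b = ip n d m lam (p a) (p b) * ((p b).eval (lam 0))⁻¹ := by
      rw [Matrix.mul_apply]
      simp only [P, B, ip, Finset.mul_sum, Finset.sum_mul, Finset.sum_range]
      exact Finset.sum_congr rfl fun k _ => by ring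
    rw [hab]
    by_cases h : a = b
    · subst h
      rw [hnorm a ha, mul_inv_cancel₀ (hk a ha), Matrix.one_apply_eq]
    · rw [horth a ha b hb (fun h' => h (Fin.ext h')), zero_mul, Matrix.one_apply_ne h]
  have hBP : B * P = 1 := mul_eq_one_comm.mp hPB
  have hdiag := congrFun (congrFun hBP ⟨i, by omega⟩) ⟨i, by omega⟩
  rw [Matrix.one_apply_eq] at hdiag
  have hsum : (n : ℝ)⁻¹ * (m i : ℝ) * (∑ j ∈ Finset.range (d + 1),
      ((p j).eval (lam i)) ^ 2 / (p j).eval (lam 0)) = 1 := by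
    rw [← hdiag, Matrix.mul_apply]
    simp only [P, B, Finset.mul_sum, Finset.sum_range]
    exact Finset.sum_congr rfl fun k _ => by ring
  have hn0 : (n : ℝ) ≠ 0 := Nat.cast_ne_zero.mpr hnpos.ne'
  rw [← eq_inv_of_mul_eq_one_left hsum, mul_inv_cancel_left₀ hn0]
end

section
/- Suppose Γ is not bipartite and let m ≥ 1. Then the odd girth of Γ (the minimum length of a cycle of odd length in Γ) equals 2m+1 if and only if α_0 = α_1 = ⋯ = α_{m−1} = 0 and α_m > 0. -/
/-!
Write `w k = ⟨X ^ k, 1⟩ = tr (A ^ k) / n` for the moments of the scalar product; `n * w k` is the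
number of closed walks of length `k`. A shortest odd closed walk is a cycle
(`exists_odd_cycle_of_odd_closed_walk`), so the odd girth is `2t+1` exactly when `w (2i+1) = 0` for
all `i < t` and `w (2t+1) > 0` (`oddGirth_eq_iff`).

On the other hand, suppose all odd moments below `2i+1` vanish. Then the scalar product is invariant
under `X ↦ -X` in the relevant degrees, so uniqueness of orthogonal polynomials forces
`p i (-X) = (-1)^i * p i (X)` (`comp_neg_X_eq`). Hence `X * (p i)^2` is an odd polynomial of degree
`2i+1`, and only its top coefficient contributes to `⟨X * p i, p i⟩` (`ip_X_mul_sq`). Since `p 1` is a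
positive multiple of `X`, the number `α_i` is a positive multiple of `w (2i+1)`
(`alph_eq_pos_mul`). Induction on `i` translates one condition into the other.
-/

open Polynomial Finset

/-- The odd girth of a graph: the minimum length of an odd cycle. -/
noncomputable def oddGirth {V : Type} (G : SimpleGraph V) : ℕ :=
  sInf {k : ℕ | Odd k ∧ ∃ (v : V) (w : G.Walk v v), w.IsCycle ∧ w.length = k}

/-! ### Moments and orthogonal polynomials -/

section
variable (n d : ℕ) (m : ℕ → ℕ) (lam : ℕ → ℝ)

theorem ip_eq_ip_mul_one (f g : ℝ[X]) : ip n d m lam f g = ip n d m lam (f * g) 1 := by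
  simp [ip, mul_assoc]

theorem ip_comm (f g : ℝ[X]) : ip n d m lam f g = ip n d m lam g f := by
  simp only [ip_eq_ip_mul_one n d m lam f g, ip_eq_ip_mul_one n d m lam g f, mul_comm]

theorem ip_sub_right (f g h : ℝ[X]) :
    ip n d m lam f (g - h) = ip n d m lam f g - ip n d m lam f h := by
  simp only [ip, eval_sub, mul_sub, Finset.sum_sub_distrib]

theorem ip_C_mul_right (c : ℝ) (f g : ℝ[X]) :
    ip n d m lam f (C c * g) = c * ip n d m lam f g := by
  simp only [ip, eval_mul, eval_C, Finset.mul_sum]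
  exact Finset.sum_congr rfl fun i _ => by ring

theorem ip_one_eq_sum (f : ℝ[X]) (N : ℕ) (hN : f.natDegree < N) :
    ip n d m lam f 1 = ∑ k ∈ Finset.range N, f.coeff k * ip n d m lam (X ^ k) 1 := by
  simp only [ip, eval_one, mul_one, eval_pow, eval_X, eval_eq_sum_range' hN, Finset.mul_sum]
  rw [Finset.sum_comm]
  exact Finset.sum_congr rfl fun i _ => Finset.sum_congr rfl fun i _ => by ring

theorem coeff_comp_neg_X (f : ℝ[X]) (k : ℕ) : (f.comp (-X)).coeff k = (-1) ^ k * f.coeff k := by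
  have : (-X : ℝ[X]) = C (-1) * X := by simp
  rw [this, comp_C_mul_X_coeff, mul_comm]

/-- If the odd moments below `2s+1` vanish, then `f ↦ ⟨f, 1⟩` is invariant under `X ↦ -X` on
polynomials of degree at most `2s`. -/
theorem ip_comp_neg_X (s : ℕ) (hs : ∀ k, Odd k → k < 2 * s + 1 → ip n d m lam (X ^ k) 1 = 0)
    (f : ℝ[X]) (hf : f.natDegree ≤ 2 * s) :
    ip n d m lam (f.comp (-X)) 1 = ip n d m lam f 1 := by
  have hf' : (f.comp (-X)).natDegree < 2 * s + 1 := by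
    rw [natDegree_comp]; simp; omega
  rw [ip_one_eq_sum n d m lam f (2 * s + 1) (by omega), ip_one_eq_sum n d m lam _ _ hf']
  refine Finset.sum_congr rfl fun k hk => ?_
  rw [coeff_comp_neg_X]
  rcases Nat.even_or_odd k with h | h
  · simp [h.neg_one_pow]
  · simp [hs k h (Finset.mem_range.mp hk)]

theorem ip_self_nonneg (f : ℝ[X]) : 0 ≤ ip n d m lam f f := by
  refine mul_nonneg (by positivity) (Finset.sum_nonneg fun i _ => ?_)
  rw [mul_assoc]
  exact mul_nonneg (by positivity) (mul_self_nonneg _)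

/-- Positive definiteness in degree at most `d`: such a polynomial is determined by its values at
the `d + 1` distinct eigenvalues. -/
theorem eq_zero_of_ip_self (hn : 0 < n) (hmpos : ∀ i ≤ d, 0 < m i)
    (hlam : ∀ i j : ℕ, i < j → j ≤ d → lam j < lam i)
    (f : ℝ[X]) (hf : f.degree < (d + 1 : ℕ)) (h : ip n d m lam f f = 0) : f = 0 := by
  have hn' : ((n : ℝ)⁻¹) ≠ 0 := by positivity
  have h0 := (mul_eq_zero.mp h).resolve_left hn'
  rw [Finset.sum_eq_zero_iff_of_nonneg (fun i _ => by
    rw [mul_assoc]; exact mul_nonneg (by positivity) (mul_self_nonneg _))] at h0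
  have hinj : Set.InjOn lam (Finset.range (d + 1)) := by
    intro i hi j hj he
    simp only [Finset.coe_range, Set.mem_Iio] at hi hj
    rcases lt_trichotomy i j with hij | hij | hij
    · exact absurd he (hlam i j hij (by omega)).ne'
    · exact hij
    · exact absurd he (hlam j i hij (by omega)).ne
  refine eq_zero_of_degree_lt_of_eval_index_eq_zero (Finset.range (d + 1)) hinj
    (by simpa using hf) fun i hi => ?_
  have hi' := hmpos i (Nat.lt_succ_iff.mp (Finset.mem_range.mp hi))
  have := h0 i hi
  rw [mul_assoc, mul_eq_zero] at this
  exact mul_self_eq_zero.mp (this.resolve_left (by positivity))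

/-- `p i` is orthogonal to every polynomial of degree less than `i`. The bound `N ≤ i` serves the
induction, which removes the leading term of `f` with a multiple of `p (N - 1)`. -/
theorem ip_eq_zero_of_degree_lt (p : ℕ → ℝ[X]) (hdeg : ∀ i ≤ d, (p i).degree = (i : ℕ))
    (horth : ∀ i ≤ d, ∀ j ≤ d, i ≠ j → ip n d m lam (p i) (p j) = 0) (i : ℕ) (hi : i ≤ d) :
    ∀ N ≤ i, ∀ f : ℝ[X], f.degree < (N : ℕ) → ip n d m lam (p i) f = 0 := by
  intro N
  induction N with
  | zero =>
    intro _ f hf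
    have : f = 0 := by simpa using hf
    simp [this, ip]
  | succ N ih =>
    intro hN f hf
    have hlead : (p N).coeff N ≠ 0 := coeff_ne_zero_of_eq_degree (hdeg N (by omega))
    set c := f.coeff N / (p N).coeff N with hc
    have h1 : ip n d m lam (p i) (f - C c * p N) = 0 := by
      refine ih (by omega) _ ((degree_lt_iff_coeff_zero _ _).mpr fun k hk => ?_)
      rcases hk.eq_or_lt with rfl | hk
      · simp [hc, hlead]
      · have h2 : f.coeff k = 0 := (degree_lt_iff_coeff_zero _ _).mp hf k hk
        have h3 : (p N).coeff k = 0 :=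
          coeff_eq_zero_of_degree_lt (by rw [hdeg N (by omega)]; exact_mod_cast hk)
        simp [h2, h3]
    rw [ip_sub_right, ip_C_mul_right, horth i hi N (by omega) (by omega)] at h1
    linarith

/-- If the odd moments below `2i+1` vanish, then `p i` has the parity of `i`: the difference
`p i (-X) - (-1)^i * p i` has degree less than `i` and is orthogonal to itself. -/
theorem comp_neg_X_eq (hn : 0 < n) (hmpos : ∀ i ≤ d, 0 < m i)
    (hlam : ∀ i j : ℕ, i < j → j ≤ d → lam j < lam i)
    (p : ℕ → ℝ[X]) (hdeg : ∀ i ≤ d, (p i).degree = (i : ℕ))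
    (horth : ∀ i ≤ d, ∀ j ≤ d, i ≠ j → ip n d m lam (p i) (p j) = 0) (i : ℕ) (hi : i ≤ d)
    (hs : ∀ k, Odd k → k < 2 * i + 1 → ip n d m lam (X ^ k) 1 = 0) :
    (p i).comp (-X) = C ((-1) ^ i) * p i := by
  set g := (p i).comp (-X) - C ((-1) ^ i) * p i with hg
  have hgdeg : g.degree < (i : ℕ) := by
    refine (degree_lt_iff_coeff_zero _ _).mpr fun k hk => ?_
    rw [hg, coeff_sub, coeff_comp_neg_X, coeff_C_mul]
    rcases hk.eq_or_lt with rfl | hk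
    · simp
    · have h3 : (p i).coeff k = 0 :=
        coeff_eq_zero_of_degree_lt (by rw [hdeg i hi]; exact_mod_cast hk)
      simp [h3]
  have hnat : (p i).natDegree = i := natDegree_eq_of_degree_eq_some (hdeg i hi)
  have hgnat : g.natDegree ≤ i := natDegree_le_of_degree_le hgdeg.le
  have horthg := ip_eq_zero_of_degree_lt n d m lam p hdeg horth i hi i le_rfl
  have hgdeg' : (g.comp (-X)).degree < (i : ℕ) := by
    refine (degree_lt_iff_coeff_zero _ _).mpr fun k hk => ?_
    rw [coeff_comp_neg_X, (degree_lt_iff_coeff_zero _ _).mp hgdeg k hk, mul_zero]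
  have h1 : ip n d m lam g ((p i).comp (-X)) = 0 := by
    rw [ip_eq_ip_mul_one, ← horthg _ hgdeg', ip_eq_ip_mul_one n d m lam (p i),
      ← ip_comp_neg_X n d m lam i hs]
    · simp [mul_comp, comp_assoc, mul_comm]
    · refine natDegree_mul_le.trans ?_
      rw [natDegree_comp]; simp; omega
  have h2 : ip n d m lam g g = 0 := by
    conv_lhs => arg 6; rw [hg]
    rw [ip_sub_right, ip_C_mul_right, h1, ip_comm n d m lam g, horthg g hgdeg]
    simp
  exact sub_eq_zero.mp (eq_zero_of_ip_self n d m lam hn hmpos hlam g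
    (hgdeg.trans (by exact_mod_cast Nat.lt_succ_of_le hi)) h2)

/-- `X * (p i)^2` is odd of degree `2i+1`, so only its top coefficient meets a nonzero moment. -/
theorem ip_X_mul_sq (hn : 0 < n) (hmpos : ∀ i ≤ d, 0 < m i)
    (hlam : ∀ i j : ℕ, i < j → j ≤ d → lam j < lam i)
    (p : ℕ → ℝ[X]) (hdeg : ∀ i ≤ d, (p i).degree = (i : ℕ))
    (horth : ∀ i ≤ d, ∀ j ≤ d, i ≠ j → ip n d m lam (p i) (p j) = 0) (i : ℕ) (hi : i ≤ d)
    (hs : ∀ k, Odd k → k < 2 * i + 1 → ip n d m lam (X ^ k) 1 = 0) :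
    ip n d m lam (X * (p i * p i)) 1 =
      (p i).leadingCoeff ^ 2 * ip n d m lam (X ^ (2 * i + 1)) 1 := by
  have hpar := comp_neg_X_eq n d m lam hn hmpos hlam p hdeg horth i hi hs
  have hp0 : p i ≠ 0 := by
    intro h; have := hdeg i hi; simp [h] at this
  have hnat : (p i).natDegree = i := natDegree_eq_of_degree_eq_some (hdeg i hi)
  have hfnat : (X * (p i * p i)).natDegree = 2 * i + 1 := by
    rw [natDegree_X_mul (mul_ne_zero hp0 hp0), natDegree_mul hp0 hp0]; omega
  have hlead : (X * (p i * p i)).coeff (2 * i + 1) = (p i).leadingCoeff ^ 2 := by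
    rw [← hfnat, coeff_natDegree, leadingCoeff_mul, leadingCoeff_mul, leadingCoeff_X]; ring
  have hodd : (X * (p i * p i)).comp (-X) = -(X * (p i * p i)) := by
    have h1 : (C ((-1 : ℝ) ^ i)) * C ((-1 : ℝ) ^ i) = 1 := by
      rw [← C_mul, ← mul_pow]; simp
    rw [mul_comp, mul_comp, hpar, X_comp]
    linear_combination (-X * p i * p i) * h1
  rw [ip_one_eq_sum n d m lam _ (2 * i + 2) (by omega), Finset.sum_range_succ, hlead,
    Finset.sum_eq_zero, zero_add]
  intro k hk
  rcases Nat.even_or_odd k with h | h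
  · have h2 := congrArg (fun q : ℝ[X] => q.coeff k) hodd
    simp only [coeff_comp_neg_X, h.neg_one_pow, coeff_neg, one_mul] at h2
    have h3 : (X * (p i * p i)).coeff k = 0 := by linarith
    rw [h3, zero_mul]
  · rw [hs k h (Finset.mem_range.mp hk), mul_zero]

/-- If the odd moments below `2i+1` vanish, then `α_i` is a positive multiple of the moment of
order `2i+1`. -/
theorem alph_eq_pos_mul (hn : 0 < n) (hmpos : ∀ i ≤ d, 0 < m i)
    (hlam : ∀ i j : ℕ, i < j → j ≤ d → lam j < lam i)
    (p : ℕ → ℝ[X]) (hdeg : ∀ i ≤ d, (p i).degree = (i : ℕ))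
    (horth : ∀ i ≤ d, ∀ j ≤ d, i ≠ j → ip n d m lam (p i) (p j) = 0)
    (hnorm : ∀ i ≤ d, ip n d m lam (p i) (p i) = (p i).eval (lam 0))
    (h1d : 1 ≤ d) (hX : ip n d m lam X 1 = 0) (i : ℕ) (hi : i ≤ d)
    (hs : ∀ k, Odd k → k < 2 * i + 1 → ip n d m lam (X ^ k) 1 = 0) :
    ∃ c : ℝ, 0 < c ∧ alph n d m lam p i = c * ip n d m lam (X ^ (2 * i + 1)) 1 := by
  have hpos : ∀ j ≤ d, 0 < ip n d m lam (p j) (p j) := by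
    intro j hj
    refine lt_of_le_of_ne (ip_self_nonneg n d m lam _) fun h => ?_
    have h0 := eq_zero_of_ip_self n d m lam hn hmpos hlam (p j)
      (by rw [hdeg j hj]; exact_mod_cast Nat.lt_succ_of_le hj) h.symm
    have := hdeg j hj
    simp [h0] at this
  -- The eigenvalues have weighted mean `0`, so the largest one is positive.
  have hlam0 : 0 < lam 0 := by
    by_contra! hneg
    have hlt : ip n d m lam X 1 < 0 := by
      refine mul_neg_of_pos_of_neg (by positivity) (Finset.sum_neg' ?_ ⟨1, by simp; omega, ?_⟩)
      · intro j hj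
        have : lam j ≤ lam 0 := by
          rcases Nat.eq_zero_or_pos j with rfl | h
          · exact le_rfl
          · exact (hlam 0 j h (by simp at hj; omega)).le
        simp only [eval_X, eval_one, mul_one]
        exact mul_nonpos_of_nonneg_of_nonpos (by positivity) (this.trans hneg)
      · simp only [eval_X, eval_one, mul_one]
        have := hlam 0 1 one_pos h1d
        exact mul_neg_of_pos_of_neg (by exact_mod_cast hmpos 1 h1d) (by linarith)
    exact hlt.ne hX
  -- `p 1` is a positive multiple of `X`.
  have hp1 : p 1 = C ((p 1).coeff 1) * X := by
    have h1 := eq_X_add_C_of_degree_le_one (hdeg 1 h1d).le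
    have h2 := ip_eq_zero_of_degree_lt n d m lam p hdeg horth 1 h1d 1 le_rfl 1 (by simp)
    have h3 : 0 < ip n d m lam 1 1 := by
      refine lt_of_le_of_ne (ip_self_nonneg n d m lam _) fun h => ?_
      exact one_ne_zero (eq_zero_of_ip_self n d m lam hn hmpos hlam 1
        (by rw [degree_one]; exact_mod_cast Nat.succ_pos d) h.symm)
    rw [ip_one_eq_sum n d m lam (p 1) 2
      (by rw [natDegree_eq_of_degree_eq_some (hdeg 1 h1d)]; norm_num)] at h2
    simp only [Finset.sum_range_succ, Finset.sum_range_zero, pow_zero, pow_one, hX] at h2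
    have h4 : (p 1).coeff 0 = 0 := by
      simpa [h3.ne'] using h2
    rwa [h4, C_0, add_zero] at h1
  have hc1 : 0 < (p 1).coeff 1 := by
    have h := hpos 1 h1d
    rw [hnorm 1 h1d, hp1] at h
    simp only [eval_mul, eval_C, eval_X] at h
    exact pos_of_mul_pos_left h hlam0.le
  have hlead : 0 < (p i).leadingCoeff ^ 2 := by
    have : p i ≠ 0 := by
      intro h; have := hdeg i hi; simp [h] at this
    have := leadingCoeff_ne_zero.mpr this
    positivity
  refine ⟨(p 1).coeff 1 * (p i).leadingCoeff ^ 2 / ip n d m lam (p i) (p i),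
    div_pos (mul_pos hc1 hlead) (hpos i hi), ?_⟩
  have : ip n d m lam (p 1 * p i) (p i) =
      (p 1).coeff 1 * ip n d m lam (X * (p i * p i)) 1 := by
    rw [ip_eq_ip_mul_one, ip_comm, ip_comm n d m lam (X * _), ← ip_C_mul_right]
    conv_lhs => rw [hp1]
    simp only [mul_assoc]
  rw [alph, xi, this, ip_X_mul_sq n d m lam hn hmpos hlam p hdeg horth i hi hs]
  ring

end

/-! ### Closed walks and odd cycles -/

/-- Cutting an odd closed walk at a repeated vertex leaves a shorter odd closed walk, so a minimal
one is a cycle. -/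
theorem exists_odd_cycle_of_odd_closed_walk {V : Type} [DecidableEq V] (G : SimpleGraph V) :
    ∀ (k : ℕ) (v : V) (w : G.Walk v v), w.length = k → Odd k →
      ∃ (u : V) (c : G.Walk u u), c.IsCycle ∧ Odd c.length ∧ c.length ≤ k := by
  intro k
  induction k using Nat.strong_induction_on with
  | _ k ih =>
    intro v w hw hk
    by_cases hc : w.IsCycle
    · exact ⟨v, w, hc, hw ▸ hk, hw.le⟩
    have h1 : k ≠ 1 := by
      rintro rfl
      exact G.loopless.irrefl v (SimpleGraph.Walk.adj_of_length_eq_one hw)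
    have h3 : 3 ≤ w.length := by
      obtain ⟨r, hr⟩ := hk
      omega
    rw [SimpleGraph.Walk.isCycle_iff_isPath_tail_and_le_length] at hc
    have htail : ¬ w.tail.IsPath := fun h => hc ⟨h, h3⟩
    rw [← SimpleGraph.Walk.IsPath.getVert_injOn_iff] at htail
    have htl := w.length_tail_add_one (by intro h; have := h.length_eq_zero ; omega)
    have : ∃ i j, i < j ∧ j < k ∧ w.getVert (i + 1) = w.getVert (j + 1) := by
      simp only [Set.InjOn, not_forall, Set.mem_ofPred_eq, SimpleGraph.Walk.getVert_tail] at htail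
      obtain ⟨i, hi, j, hj, he, hne⟩ := htail
      rcases lt_or_gt_of_ne hne with h | h
      · exact ⟨i, j, h, by omega, he⟩
      · exact ⟨j, i, h, by omega, he.symm⟩
    obtain ⟨i, j, hij, hjk, he⟩ := this
    -- Cut the walk at its repeated vertex: the inner and the outer loop have lengths summing to `k`.
    let c₁ : G.Walk (w.getVert (i + 1)) (w.getVert (i + 1)) :=
      ((w.drop (i + 1)).take (j - i)).copy rfl (by
        rw [SimpleGraph.Walk.drop_getVert, he]; congr 1; omega)
    let c₂ : G.Walk v v := (w.take (i + 1)).append ((w.drop (j + 1)).copy he.symm rfl)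
    have l1 : c₁.length = j - i := by
      simp [c₁]; omega
    have l2 : c₂.length = k - (j - i) := by
      simp [c₂]; omega
    by_cases ho : Odd (j - i)
    · obtain ⟨u, c, h1, h2, h3⟩ := ih (j - i) (by omega) _ c₁ l1 ho
      exact ⟨u, c, h1, h2, by omega⟩
    · have ho' : Odd (k - (j - i)) := by
        rw [Nat.odd_iff] at *
        omega
      obtain ⟨u, c, h1, h2, h3⟩ := ih _ (by omega) _ c₂ l2 ho'
      exact ⟨u, c, h1, h2, by omega⟩

/-- The spectral theorem turns the factorization of the characteristic polynomial into a formula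
for the traces of powers. -/
theorem trace_adjMatrix_pow {V : Type} [Fintype V] [DecidableEq V] (G : SimpleGraph V)
    [DecidableRel G.Adj] (d : ℕ) (lam : ℕ → ℝ) (m : ℕ → ℕ)
    (hchar : (G.adjMatrix ℝ).charpoly =
      ∏ i ∈ Finset.range (d + 1), (Polynomial.X - Polynomial.C (lam i)) ^ m i) (k : ℕ) :
    ((G.adjMatrix ℝ) ^ k).trace = ∑ i ∈ Finset.range (d + 1), (m i : ℝ) * lam i ^ k := by
  have hA : (G.adjMatrix ℝ).IsHermitian := by
    ext i j; simp [G.adj_comm]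
  have h1 : ((G.adjMatrix ℝ) ^ k).trace = ∑ i, hA.eigenvalues i ^ k := by
    conv_lhs => rw [hA.spectral_theorem, ← map_pow, Unitary.conjStarAlgAut_apply,
      Matrix.trace_mul_cycle]
    simp [Matrix.diagonal_pow, Matrix.trace_diagonal]
  have h2 : ∑ i, hA.eigenvalues i ^ k = ((G.adjMatrix ℝ).charpoly.roots.map (· ^ k)).sum := by
    rw [hA.roots_charpoly_eq_eigenvalues]
    simp
  rw [h1, h2, hchar, Polynomial.roots_prod _ _
    (Finset.prod_ne_zero_iff.mpr fun i _ => pow_ne_zero _ (Polynomial.X_sub_C_ne_zero _))]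
  simp only [Polynomial.roots_pow, Polynomial.roots_X_sub_C, Multiset.map_bind, Multiset.sum_bind,
    Multiset.map_nsmul, Multiset.sum_nsmul, Multiset.map_singleton, Multiset.sum_singleton,
    nsmul_eq_mul]
  rfl

/-- The trace of `A ^ k` counts the closed walks of length `k`. -/
theorem trace_pos_iff {V : Type} [Fintype V] [DecidableEq V] (G : SimpleGraph V)
    [DecidableRel G.Adj] (k : ℕ) :
    0 < ((G.adjMatrix ℝ) ^ k).trace ↔ ∃ (v : V) (w : G.Walk v v), w.length = k := by
  simp only [Matrix.trace, Matrix.diag_apply, SimpleGraph.adjMatrix_pow_apply_eq_card_walk]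
  rw [← Nat.cast_sum, Nat.cast_pos, Finset.sum_pos_iff]
  simp only [Finset.mem_univ, true_and, Fintype.card_pos_iff]
  exact exists_congr fun v => nonempty_subtype

theorem trace_adjMatrix_pow_nonneg {V : Type} [Fintype V] [DecidableEq V] (G : SimpleGraph V)
    [DecidableRel G.Adj] (k : ℕ) : 0 ≤ ((G.adjMatrix ℝ) ^ k).trace := by
  simp only [Matrix.trace, Matrix.diag_apply, SimpleGraph.adjMatrix_pow_apply_eq_card_walk]
  positivity

theorem oddGirth_eq_iff {V : Type} [Fintype V] [DecidableEq V] (G : SimpleGraph V)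
    [DecidableRel G.Adj] (t : ℕ) :
    oddGirth G = 2 * t + 1 ↔ (∀ i < t, ((G.adjMatrix ℝ) ^ (2 * i + 1)).trace = 0) ∧
      0 < ((G.adjMatrix ℝ) ^ (2 * t + 1)).trace := by
  have hz : ∀ k, ((G.adjMatrix ℝ) ^ k).trace = 0 ↔ ¬ ∃ (v : V) (w : G.Walk v v), w.length = k :=
    fun k => by
      rw [← trace_pos_iff, not_lt]
      exact ⟨fun h => h.le, fun h => le_antisymm h (trace_adjMatrix_pow_nonneg G k)⟩
  simp only [hz, trace_pos_iff]
  constructor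
  · intro h
    have hne : {k : ℕ | Odd k ∧ ∃ (v : V) (w : G.Walk v v), w.IsCycle ∧ w.length = k}.Nonempty := by
      refine Nat.nonempty_of_pos_sInf ?_
      change 0 < oddGirth G
      omega
    have hmem := Nat.sInf_mem hne
    change oddGirth G ∈ _ at hmem
    rw [h] at hmem
    obtain ⟨-, v, w, -, hw⟩ := hmem
    refine ⟨?_, v, w, hw⟩
    rintro i hi ⟨u, c, hc⟩
    obtain ⟨u', c', h1, h2, h3⟩ :=
      exists_odd_cycle_of_odd_closed_walk G _ u c hc (odd_two_mul_add_one i)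
    have : oddGirth G ≤ c'.length := Nat.sInf_le ⟨h2, u', c', h1, rfl⟩
    omega
  · rintro ⟨h, v, w, hw⟩
    obtain ⟨u, c, h1, h2, h3⟩ :=
      exists_odd_cycle_of_odd_closed_walk G _ v w hw (odd_two_mul_add_one t)
    have hle : oddGirth G ≤ c.length := Nat.sInf_le ⟨h2, u, c, h1, rfl⟩
    have hmem : oddGirth G ∈
        {k : ℕ | Odd k ∧ ∃ (v : V) (w : G.Walk v v), w.IsCycle ∧ w.length = k} :=
      Nat.sInf_mem ⟨c.length, h2, u, c, h1, rfl⟩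
    obtain ⟨⟨i, hi⟩, v', w', -, hw'⟩ := hmem
    by_contra hne
    exact h i (by omega) ⟨v', w', by omega⟩

theorem stmt_15
    (V : Type) [Fintype V] [DecidableEq V] (G : SimpleGraph V) [DecidableRel G.Adj]
    (hconn : G.Connected) (n d : ℕ) (hn : Fintype.card V = n)
    (lam : ℕ → ℝ) (m : ℕ → ℕ)
    (hchar : (G.adjMatrix ℝ).charpoly =
      ∏ i ∈ Finset.range (d + 1), (Polynomial.X - Polynomial.C (lam i)) ^ m i)
    (hlam : ∀ i j : ℕ, i < j → j ≤ d → lam j < lam i)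
    (hm0 : m 0 = 1) (hmpos : ∀ i ≤ d, 0 < m i)
    (p : ℕ → Polynomial ℝ)
    (hdeg : ∀ i ≤ d, (p i).degree = (i : ℕ))
    (horth : ∀ i ≤ d, ∀ j ≤ d, i ≠ j → ip n d m lam (p i) (p j) = 0)
    (hnorm : ∀ i ≤ d, ip n d m lam (p i) (p i) = (p i).eval (lam 0))
    (hnb : ¬ G.Colorable 2) (t : ℕ) (ht : 1 ≤ t) (htd : t ≤ d) :
    oddGirth G = 2 * t + 1 ↔
      (∀ i < t, alph n d m lam p i = 0) ∧ 0 < alph n d m lam p t := by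
  have hn0 : 0 < n := by
    have := hconn.nonempty
    rw [← hn]
    exact Fintype.card_pos
  have hw : ∀ k, ip n d m lam (X ^ k) 1 = (n : ℝ)⁻¹ * ((G.adjMatrix ℝ) ^ k).trace := by
    intro k
    simp [ip, trace_adjMatrix_pow G d lam m hchar k]
  have hninv : 0 < (n : ℝ)⁻¹ := by positivity
  have hX : ip n d m lam X 1 = 0 := by
    have := hw 1
    rwa [pow_one, pow_one, SimpleGraph.trace_adjMatrix, mul_zero] at this
  have key : ∀ i ≤ d, (∀ j < i, ((G.adjMatrix ℝ) ^ (2 * j + 1)).trace = 0) →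
      ∃ c : ℝ, 0 < c ∧ alph n d m lam p i = c * ((G.adjMatrix ℝ) ^ (2 * i + 1)).trace := by
    intro i hi h
    obtain ⟨c, hc, he⟩ := alph_eq_pos_mul n d m lam hn0 hmpos hlam p hdeg horth hnorm
      (ht.trans htd) hX i hi (by
        rintro k ⟨j, rfl⟩ hk
        rw [hw, h j (by omega), mul_zero])
    exact ⟨c * (n : ℝ)⁻¹, mul_pos hc hninv, by rw [he, hw]; ring⟩
  have hzero : (∀ i < t, alph n d m lam p i = 0) ↔
      ∀ i < t, ((G.adjMatrix ℝ) ^ (2 * i + 1)).trace = 0 := by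
    constructor
    · intro h i
      induction i using Nat.strong_induction_on with
      | _ i ih =>
        intro hi
        obtain ⟨c, hc, he⟩ := key i (by omega) fun j hj => ih j hj (by omega)
        rw [h i hi] at he
        exact (mul_eq_zero.mp he.symm).resolve_left hc.ne'
    · intro h i hi
      obtain ⟨c, hc, he⟩ := key i (by omega) fun j hj => h j (by omega)
      rw [he, h i hi, mul_zero]
  rw [oddGirth_eq_iff G t, hzero]
  refine and_congr_right fun h => ?_
  obtain ⟨c, hc, he⟩ := key t htd h
  rw [he, mul_pos_iff_of_pos_left hc]
end
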